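/- Under the stated EXTRA setting and cost assumptions, there exists a threshold μ̄ > 0 such that whenever 0 < μ ≤ μ̄, the EXTRA iterates (W_i^e, Y_i^e) converge exponentially fast to (W⋆, Y⋆_o): there exist C ≥ 0 and ρ ∈ [0,1) such that for all i ≥ 0, ∑_k ‖(W_i^e)_k − w⋆‖² + ∑_k ‖(Y_i^e)_k − (Y⋆_o)_k‖² ≤ C ρ^i, where W⋆ = (w⋆,…,w⋆) and Y⋆_o is the unique dual vector lying in the range of V ⊗ I_M such that μ∇J_k(w⋆) + N ∑_l V_{k,l}(Y⋆_o)_l = 0 for every k. -/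

import Mathlib

open Matrix

/-!
Write `w_i`, `y_i` for the errors of the primal and dual iterates and `d_i` for the block vector
of gradient differences `∇J_k(W_i) - ∇J_k(w⋆)`. Since `Ā = I - N V²`, the two recursions combine
into the implicit form `Ā (w_{i+1} - w_i) + μ d_i + N V y_{i+1} = 0`. Pairing it with `w_{i+1}`
and using `V w_{i+1} = y_{i+1} - y_i` gives, for the energy `E = ⟨Ā w, w⟩ + N ‖y‖²`,
`E_{i+1} = E_i - ⟨Ā Δ, Δ⟩ - N ‖V w_{i+1}‖² - 2 μ ⟨d_i, w_{i+1}⟩`, where `Δ = w_{i+1} - w_i`.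

Three coercivity facts turn this into a contraction:
* `Ā` is positive definite (`exists_coercive`), because `-1` is not an eigenvalue of the primitive
  matrix `A`;
* `‖w‖² ≤ K (‖V w‖² + ⟨d, w⟩)` (`exists_consensus_bound` and strong monotonicity of `∇J_{k₀}`),
  because the kernel of `V` consists of the consensus vectors;
* `‖y‖ ≤ a ‖V y‖` on the range of `V` (`exists_norm_le_on_range`), where every `y_i` lies.

By the second fact and the Lipschitz bound, for small `μ` the term `2 μ ⟨d_i, Δ⟩` is absorbed, and
`E` decreases by at least a multiple of `D = ‖Δ‖² + ‖V w_{i+1}‖² + ⟨d_i, w_i⟩`. The implicit form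
and the last two facts bound `E_{i+1}` by a multiple of `D`, so `E_{i+1} ≤ ρ E_i` with `ρ < 1`
(`extra_abstract_step`).
-/

/-! ### The energy contraction -/

set_option maxHeartbeats 1000000 in
/-- One EXTRA step contracts the energy `⟨B w, w⟩ + n ‖y‖²`, in an abstract inner product space with
`B = I - n V²` coercive. The hypotheses `h1`, `h2`, `h3` bound the step-size; the rate `ρ` depends
only on the constants and on the operators. -/
theorem extra_abstract_step {X : Type*} [NormedAddCommGroup X] [InnerProductSpace ℝ X]
    (V B : X →L[ℝ] X) (n c K a δ μ : ℝ) (hn : 0 < n) (hc : 0 < c) (hK : 0 < K) (ha : 0 < a)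
    (hδ : 0 < δ) (hμ : 0 < μ)
    (hVs : ∀ x y, inner ℝ (V x) y = inner ℝ x (V y))
    (hBs : ∀ x y, inner ℝ (B x) y = inner ℝ x (B y))
    (hB : ∀ x, B x = x - n • V (V x))
    (hBc : ∀ x, c * ‖x‖ ^ 2 ≤ inner ℝ (B x) x)
    (h1 : 2 / c * (δ ^ 2 * K) * μ ≤ 1)
    (h2 : 2 * (2 / c * (δ ^ 2 * K)) * μ ^ 2 ≤ n / 2)
    (h3 : 2 * ‖V‖ ^ 2 * (2 / c * (δ ^ 2 * K)) * μ ^ 2 ≤ c / 4) :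
    ∃ ρ : ℝ, 0 ≤ ρ ∧ ρ < 1 ∧ ∀ w y d w' y' : X,
      ‖d‖ ≤ δ * ‖w‖ → 0 ≤ inner ℝ d w →
      ‖w‖ ^ 2 ≤ K * (‖V w‖ ^ 2 + inner ℝ d w) →
      ‖y'‖ ≤ a * ‖V y'‖ →
      w' = B w - μ • d - n • V y → y' = y + V w' →
      inner ℝ (B w') w' + n * ‖y'‖ ^ 2 ≤ ρ * (inner ℝ (B w) w + n * ‖y‖ ^ 2) := by
  obtain ⟨κ, hκ, hκ1, hκ2, hκ3⟩ : ∃ κ : ℝ, 0 < κ ∧ κ ≤ c / 4 ∧ κ ≤ n / 2 ∧ κ ≤ μ :=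
    ⟨min (c / 4) (min (n / 2) μ), by positivity, by simp, by simp, by simp⟩
  set b := ‖V‖ with hb
  set β := ‖B‖ with hβ
  have hb0 : 0 ≤ b := norm_nonneg _
  have hβ0 : 0 ≤ β := norm_nonneg _
  -- `D` below is the dissipation; `‖w‖² ≤ K1 * D`, and the new energy is at most `Γ * D`
  set K1 := K * (2 * b ^ 2 + 2) with hK1
  set Γ := β * (2 * K1 + 2) + n * (a ^ 2 * ((2 * β ^ 2 + 2 * μ ^ 2 * (δ ^ 2 * K1)) / n ^ 2)) + 1
    with hΓ
  have hΓ0 : 0 < Γ := by positivity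
  refine ⟨(1 + κ / Γ)⁻¹, by positivity, inv_lt_one_of_one_lt₀ (by
    have : 0 < κ / Γ := by positivity
    linarith), ?_⟩
  intro w y d w' y' hd hp hw hy' hw' hy
  set p := inner ℝ d w with hpdef
  set e := w' - w with he
  have hVw' : V w' = y' - y := by rw [hy]; abel
  -- the implicit form of the primal step: the dual variable enters at its new value
  have key : B e + μ • d + n • V y' = 0 := by
    have hV' : V y' = V y + V (V w') := by rw [hy, map_add]
    have : B e = B w' - B w := by rw [he, map_sub]
    rw [this, hV', hB w', smul_add]
    nth_rewrite 1 [hw']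
    abel
  have hsum : inner ℝ (B e) w' + μ * inner ℝ d w' + n * inner ℝ y' (y' - y) = 0 := by
    have := congrArg (fun z => inner ℝ z w') key
    simpa [inner_add_left, inner_smul_left, hVs, hVw'] using this
  have hyid : 2 * inner ℝ y' (y' - y) = ‖y'‖ ^ 2 - ‖y‖ ^ 2 + ‖V w'‖ ^ 2 := by
    rw [hVw', norm_sub_sq_real, inner_sub_right, real_inner_self_eq_norm_sq]; ring
  have hwid : 2 * inner ℝ (B e) w' = inner ℝ (B w') w' - inner ℝ (B w) w + inner ℝ (B e) e := by
    have h : inner ℝ (B w) w' = inner ℝ (B w') w := by rw [hBs, real_inner_comm]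
    simp only [he, map_sub, inner_sub_left, inner_sub_right]
    rw [h]; ring
  have hdw : inner ℝ d w' = p + inner ℝ d e := by
    rw [he, inner_sub_right]; ring
  have hde : -(2 * μ * inner ℝ d e) ≤ c / 2 * ‖e‖ ^ 2 + 2 / c * μ ^ 2 * ‖d‖ ^ 2 := by
    have h := abs_real_inner_le_norm d e
    have h' := (abs_le.1 h).1
    -- Young's inequality, with weight chosen to use half of the coercivity of `B`
    have hsq : 0 ≤ 2 / c * (μ * ‖d‖ - c / 2 * ‖e‖) ^ 2 := by positivity
    have hex : 2 / c * (μ * ‖d‖ - c / 2 * ‖e‖) ^ 2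
        = 2 / c * μ ^ 2 * ‖d‖ ^ 2 - 2 * μ * (‖d‖ * ‖e‖) + c / 2 * ‖e‖ ^ 2 := by
      field_simp; ring
    have : -(2 * μ * inner ℝ d e) ≤ 2 * μ * (‖d‖ * ‖e‖) := by
      have := mul_le_mul_of_nonneg_left h' (by positivity : 0 ≤ 2 * μ)
      linarith
    linarith
  have hVe : ‖V e‖ ^ 2 ≤ b ^ 2 * ‖e‖ ^ 2 := by
    rw [← mul_pow]; exact pow_le_pow_left₀ (norm_nonneg _) (V.le_opNorm e) 2
  have hadd : ∀ u v : X, ‖u + v‖ ^ 2 ≤ 2 * ‖u‖ ^ 2 + 2 * ‖v‖ ^ 2 := fun u v => by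
    have := pow_le_pow_left₀ (norm_nonneg _) (norm_add_le u v) 2
    linarith [sq_nonneg (‖u‖ - ‖v‖), this]
  have hVw : ‖V w‖ ^ 2 ≤ 2 * ‖V w'‖ ^ 2 + 2 * b ^ 2 * ‖e‖ ^ 2 := by
    have h := hadd (V w') (-(V e))
    have : V w' + -(V e) = V w := by rw [he, map_sub]; abel
    rw [this, norm_neg] at h
    linarith
  have hwb : ‖w‖ ^ 2 ≤ K * (2 * ‖V w'‖ ^ 2 + 2 * b ^ 2 * ‖e‖ ^ 2 + p) :=
    hw.trans (by gcongr)
  have hd2 : ‖d‖ ^ 2 ≤ δ ^ 2 * ‖w‖ ^ 2 := by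
    rw [← mul_pow]; exact pow_le_pow_left₀ (norm_nonneg _) hd 2
  have hdis : 2 / c * μ ^ 2 * ‖d‖ ^ 2 ≤ n / 2 * ‖V w'‖ ^ 2 + c / 4 * ‖e‖ ^ 2 + μ * p := by
    calc 2 / c * μ ^ 2 * ‖d‖ ^ 2
        ≤ 2 / c * μ ^ 2 * (δ ^ 2 * (K * (2 * ‖V w'‖ ^ 2 + 2 * b ^ 2 * ‖e‖ ^ 2 + p))) := by
          gcongr; exact hd2.trans (by gcongr)
      _ = (2 * (2 / c * (δ ^ 2 * K)) * μ ^ 2) * ‖V w'‖ ^ 2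
          + (2 * b ^ 2 * (2 / c * (δ ^ 2 * K)) * μ ^ 2) * ‖e‖ ^ 2
          + (2 / c * (δ ^ 2 * K) * μ) * μ * p := by ring
      _ ≤ n / 2 * ‖V w'‖ ^ 2 + c / 4 * ‖e‖ ^ 2 + 1 * μ * p := by gcongr
      _ = _ := by ring
  set D := ‖e‖ ^ 2 + ‖V w'‖ ^ 2 + p with hD
  have hD0 : 0 ≤ D := by positivity
  have hdecr : inner ℝ (B w') w' + n * ‖y'‖ ^ 2 + κ * D
      ≤ inner ℝ (B w) w + n * ‖y‖ ^ 2 := by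
    have hc' := hBc e
    have k1 : κ * ‖e‖ ^ 2 ≤ c / 4 * ‖e‖ ^ 2 := by gcongr
    have k2 : κ * ‖V w'‖ ^ 2 ≤ n / 2 * ‖V w'‖ ^ 2 := by gcongr
    have k3 : κ * p ≤ μ * p := by gcongr
    have hs : inner ℝ (B w') w' - inner ℝ (B w) w + inner ℝ (B e) e + 2 * μ * (p + inner ℝ d e)
        + n * (‖y'‖ ^ 2 - ‖y‖ ^ 2 + ‖V w'‖ ^ 2) = 0 := by
      rw [← hyid, ← hwid, ← hdw]; linarith
    have : κ * D = κ * ‖e‖ ^ 2 + κ * ‖V w'‖ ^ 2 + κ * p := by rw [hD]; ring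
    linarith
  have hwD : ‖w‖ ^ 2 ≤ K1 * D := by
    refine hwb.trans ?_
    rw [hK1, mul_assoc K]
    refine mul_le_mul_of_nonneg_left ?_ hK.le
    have : 0 ≤ ‖V w'‖ ^ 2 := by positivity
    have : 0 ≤ ‖e‖ ^ 2 := by positivity
    have : 0 ≤ b ^ 2 * ‖V w'‖ ^ 2 := by positivity
    have : 0 ≤ b ^ 2 * p := by positivity
    rw [hD]; linarith
  have heD : ‖e‖ ^ 2 ≤ D := by
    have : 0 ≤ ‖V w'‖ ^ 2 := by positivity
    rw [hD]; linarith
  have hw'D : ‖w'‖ ^ 2 ≤ (2 * K1 + 2) * D := by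
    have h := hadd w e
    rw [show w + e = w' by rw [he]; abel] at h
    linarith
  have hBw' : inner ℝ (B w') w' ≤ β * ((2 * K1 + 2) * D) := by
    calc inner ℝ (B w') w' ≤ ‖B w'‖ * ‖w'‖ := real_inner_le_norm _ _
      _ ≤ β * ‖w'‖ * ‖w'‖ := by gcongr; exact B.le_opNorm _
      _ = β * ‖w'‖ ^ 2 := by ring
      _ ≤ _ := by gcongr
  have hVy : n ^ 2 * ‖V y'‖ ^ 2 ≤ (2 * β ^ 2 + 2 * μ ^ 2 * (δ ^ 2 * K1)) * D := by
    have h : n • V y' = -(B e + μ • d) := by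
      rw [eq_neg_iff_add_eq_zero, add_comm]; exact key
    have h' := hadd (B e) (μ • d)
    have hnn : n ^ 2 * ‖V y'‖ ^ 2 = ‖B e + μ • d‖ ^ 2 := by
      rw [← norm_neg (B e + μ • d), ← h, norm_smul, mul_pow, Real.norm_eq_abs, sq_abs]
    have hBe : ‖B e‖ ^ 2 ≤ β ^ 2 * D := by
      calc ‖B e‖ ^ 2 ≤ (β * ‖e‖) ^ 2 := pow_le_pow_left₀ (norm_nonneg _) (B.le_opNorm e) 2
        _ = β ^ 2 * ‖e‖ ^ 2 := by ring
        _ ≤ _ := by gcongr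
    have hmd : ‖μ • d‖ ^ 2 ≤ μ ^ 2 * (δ ^ 2 * (K1 * D)) := by
      rw [norm_smul, mul_pow, Real.norm_eq_abs, sq_abs]
      gcongr
      exact hd2.trans (by gcongr)
    rw [hnn]; linarith
  have hyD : ‖y'‖ ^ 2 ≤ a ^ 2 * ((2 * β ^ 2 + 2 * μ ^ 2 * (δ ^ 2 * K1)) / n ^ 2) * D := by
    calc ‖y'‖ ^ 2 ≤ (a * ‖V y'‖) ^ 2 := pow_le_pow_left₀ (norm_nonneg _) hy' 2
      _ = a ^ 2 * ((n ^ 2 * ‖V y'‖ ^ 2) / n ^ 2) := by field_simp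
      _ ≤ a ^ 2 * (((2 * β ^ 2 + 2 * μ ^ 2 * (δ ^ 2 * K1)) * D) / n ^ 2) := by gcongr
      _ = _ := by ring
  have hE : inner ℝ (B w') w' + n * ‖y'‖ ^ 2 ≤ Γ * D := by
    have := mul_le_mul_of_nonneg_left hyD hn.le
    have hexp : Γ * D = β * ((2 * K1 + 2) * D)
        + n * (a ^ 2 * ((2 * β ^ 2 + 2 * μ ^ 2 * (δ ^ 2 * K1)) / n ^ 2) * D) + D := by
      rw [hΓ]; ring
    linarith
  rw [inv_mul_eq_div, le_div_iff₀ (by positivity)]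
  have : κ / Γ * (inner ℝ (B w') w' + n * ‖y'‖ ^ 2) ≤ κ * D := by
    calc _ ≤ κ / Γ * (Γ * D) := by gcongr
      _ = _ := by field_simp
  linarith

/-! ### Monotonicity of gradients -/

theorem inner_sub_nonneg_of_convexOn {E : Type*} [NormedAddCommGroup E] [InnerProductSpace ℝ E]
    [CompleteSpace E] {f : E → ℝ} {g : E → E} (hg : ∀ x, HasGradientAt f (g x) x)
    (hf : ConvexOn ℝ Set.univ f) (x y : E) : 0 ≤ inner ℝ (g x - g y) (x - y) := by
  have hφ : ConvexOn ℝ Set.univ (f ∘ AffineMap.lineMap (k := ℝ) y x) :=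
    hf.comp_affineMap (AffineMap.lineMap y x)
  have hd : ∀ t : ℝ, HasDerivAt (f ∘ AffineMap.lineMap (k := ℝ) y x)
      (inner ℝ (g (AffineMap.lineMap y x t)) (x - y)) t := fun t => by
    have h1 := (hg (AffineMap.lineMap y x t)).hasFDerivAt
    have h2 : HasDerivAt (fun s : ℝ => AffineMap.lineMap (k := ℝ) y x s) (x - y) t :=
      AffineMap.hasDerivAt_lineMap
    simpa using h1.comp_hasDerivAt t h2
  have h0 := hφ.le_slope_of_hasDerivAt (Set.mem_univ 0) (Set.mem_univ 1) one_pos (hd 0)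
  have h1 := hφ.slope_le_of_hasDerivAt (Set.mem_univ 0) (Set.mem_univ 1) one_pos (hd 1)
  simp only [AffineMap.lineMap_apply_zero, AffineMap.lineMap_apply_one] at h0 h1
  rw [inner_sub_left]; linarith

theorem inner_sub_ge_of_strongConvexOn {E : Type*} [NormedAddCommGroup E] [InnerProductSpace ℝ E]
    [CompleteSpace E] {f : E → ℝ} {g : E → E} {ν : ℝ} (hg : ∀ x, HasGradientAt f (g x) x)
    (hf : StrongConvexOn Set.univ ν f) (x y : E) :
    ν * ‖x - y‖ ^ 2 ≤ inner ℝ (g x - g y) (x - y) := by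
  have hc := strongConvexOn_iff_convex.1 hf
  have hg' : ∀ x, HasGradientAt (fun x => f x - ν / 2 * ‖x‖ ^ 2) (g x - ν • x) x := fun x => by
    rw [hasGradientAt_iff_hasFDerivAt]
    have h1 := (hg x).hasFDerivAt
    have h2 := ((hasStrictFDerivAt_norm_sq x).hasFDerivAt).const_mul (ν / 2)
    refine (h1.sub h2).congr_fderiv ?_
    ext z
    simp
    ring
  have := inner_sub_nonneg_of_convexOn hg' hc x y
  rw [show g x - ν • x - (g y - ν • y) = (g x - g y) - ν • (x - y) by rw [smul_sub]; abel,
    inner_sub_left, inner_smul_left, real_inner_self_eq_norm_sq] at this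
  simpa using this

/-! ### The step-size threshold -/

/-- The step-size threshold, meeting the three requirements of `extra_abstract_step`. -/
theorem exists_stepsize {G n c : ℝ} (b : ℝ) (hG : 0 < G) (hn : 0 < n) (hc : 0 < c) :
    ∃ μbar : ℝ, 0 < μbar ∧ ∀ μ : ℝ, 0 < μ → μ ≤ μbar →
      G * μ ≤ 1 ∧ 2 * G * μ ^ 2 ≤ n / 2 ∧ 2 * b ^ 2 * G * μ ^ 2 ≤ c / 4 := by
  refine ⟨min 1 (min (1 / G) (min (n / (4 * G)) (c / (8 * (b ^ 2 + 1) * G)))), by positivity, ?_⟩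
  intro μ hμ h
  simp only [le_min_iff] at h
  obtain ⟨h0, h1, h2, h3⟩ := h
  rw [le_div_iff₀ (by positivity)] at h1 h2 h3
  have hsq : μ ^ 2 ≤ μ := by nlinarith
  refine ⟨by linarith, ?_, ?_⟩
  · calc 2 * G * μ ^ 2 ≤ 2 * G * μ := by gcongr
      _ ≤ n / 2 := by linarith
  · calc 2 * b ^ 2 * G * μ ^ 2 ≤ 2 * (b ^ 2 + 1) * G * μ := by gcongr; linarith
      _ ≤ c / 4 := by linarith

/-! ### Block operators and consensus -/

/-- The space `H^N` of block vectors, with its Euclidean norm. -/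
abbrev BlockVec (N : ℕ) (H : Type*) : Type _ := PiLp 2 (fun _ : Fin N => H)

section Block

variable {N : ℕ} {H : Type*} [NormedAddCommGroup H] [InnerProductSpace ℝ H]
  [FiniteDimensional ℝ H]

/-- The block operator `S ⊗ I`, whose `k`-th output block is `∑ l, S k l • x l`. -/
noncomputable def blockOp {N : ℕ} (H : Type*) [NormedAddCommGroup H] [InnerProductSpace ℝ H]
    [FiniteDimensional ℝ H] (S : Matrix (Fin N) (Fin N) ℝ) : BlockVec N H →L[ℝ] BlockVec N H :=
  LinearMap.toContinuousLinearMap (E := BlockVec N H)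
    { toFun := fun x => WithLp.toLp 2 (fun k => ∑ l, S k l • x l)
      map_add' := fun x y => by
        ext1 k
        simp [smul_add, Finset.sum_add_distrib]
      map_smul' := fun r x => by
        ext1 k
        simp only [PiLp.smul_apply, RingHom.id_apply, Finset.smul_sum]
        exact Finset.sum_congr rfl fun l _ => smul_comm _ _ _ }

theorem blockOp_apply (S : Matrix (Fin N) (Fin N) ℝ) (x : BlockVec N H) (k : Fin N) :
    blockOp H S x k = ∑ l, S k l • x l := rfl

theorem blockOp_mul (S T : Matrix (Fin N) (Fin N) ℝ) (x : BlockVec N H) :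
    blockOp H (S * T) x = blockOp H S (blockOp H T x) := by
  ext1 k
  simp only [blockOp_apply, Matrix.mul_apply, Finset.sum_smul, Finset.smul_sum, smul_smul]
  exact Finset.sum_comm

theorem blockOp_add (S T : Matrix (Fin N) (Fin N) ℝ) (x : BlockVec N H) :
    blockOp H (S + T) x = blockOp H S x + blockOp H T x := by
  ext1 k
  simp [blockOp_apply, add_smul, Finset.sum_add_distrib]

theorem blockOp_sub (S T : Matrix (Fin N) (Fin N) ℝ) (x : BlockVec N H) :
    blockOp H (S - T) x = blockOp H S x - blockOp H T x := by
  ext1 k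
  simp [blockOp_apply, sub_smul, Finset.sum_sub_distrib]

theorem blockOp_smul (r : ℝ) (S : Matrix (Fin N) (Fin N) ℝ) (x : BlockVec N H) :
    blockOp H (r • S) x = r • blockOp H S x := by
  ext1 k
  simp [blockOp_apply, Finset.smul_sum, smul_smul]

theorem blockOp_one (x : BlockVec N H) :
    blockOp H (1 : Matrix (Fin N) (Fin N) ℝ) x = x := by
  ext1 k
  simp [blockOp_apply, Matrix.one_apply]

theorem blockOp_const {S : Matrix (Fin N) (Fin N) ℝ} (hS : ∀ i, ∑ j, S i j = 1)
    {x : BlockVec N H} (hx : ∀ k l, x k = x l) : blockOp H S x = x := by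
  ext1 k
  rw [blockOp_apply, Finset.sum_congr rfl fun l _ => by rw [hx l k], ← Finset.sum_smul, hS,
    one_smul]

theorem inner_blockOp {S : Matrix (Fin N) (Fin N) ℝ} (hS : S.IsSymm) (x y : BlockVec N H) :
    inner ℝ (blockOp H S x) y = inner ℝ x (blockOp H S y) := by
  simp only [PiLp.inner_apply, blockOp_apply, sum_inner, inner_sum, real_inner_smul_left,
    real_inner_smul_right]
  rw [Finset.sum_comm]
  refine Finset.sum_congr rfl fun k _ => Finset.sum_congr rfl fun l _ => ?_
  rw [hS.apply]

/-- The edge energy of a symmetric matrix with unit row sums. The sign `s = 1` detects vectors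
fixed by `S`, the sign `s = -1` those mapped to their negatives. -/
theorem edge_energy {S : Matrix (Fin N) (Fin N) ℝ} (hS : S.IsSymm) (hr : ∀ i, ∑ j, S i j = 1)
    (s : ℝ) (hs : s ^ 2 = 1) (x : BlockVec N H) :
    ∑ k, ∑ l, S k l * ‖x k - s • x l‖ ^ 2
      = 2 * (‖x‖ ^ 2 - s * inner ℝ (blockOp H S x) x) := by
  have hc : ∀ l, ∑ k, S k l = 1 := fun l => by
    rw [← hr l]; exact Finset.sum_congr rfl fun k _ => hS.apply _ _
  have h1 : ∑ k, ∑ l, S k l * ‖x k‖ ^ 2 = ‖x‖ ^ 2 := by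
    simp [← Finset.sum_mul, hr, PiLp.norm_sq_eq_of_L2]
  have h2 : ∑ k, ∑ l, S k l * ‖x l‖ ^ 2 = ‖x‖ ^ 2 := by
    rw [Finset.sum_comm]
    simp [← Finset.sum_mul, hc, PiLp.norm_sq_eq_of_L2]
  have h3 : ∑ k, ∑ l, S k l * inner ℝ (x k) (x l) = inner ℝ (blockOp H S x) x := by
    rw [real_inner_comm]
    simp only [PiLp.inner_apply, blockOp_apply, inner_sum, real_inner_smul_right]
  calc ∑ k, ∑ l, S k l * ‖x k - s • x l‖ ^ 2
      = ∑ k, ∑ l, (S k l * ‖x k‖ ^ 2 + S k l * ‖x l‖ ^ 2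
          - 2 * s * (S k l * inner ℝ (x k) (x l))) := by
        refine Finset.sum_congr rfl fun k _ => Finset.sum_congr rfl fun l _ => ?_
        rw [norm_sub_sq_real, norm_smul, real_inner_smul_right, mul_pow, Real.norm_eq_abs, sq_abs,
          hs]
        ring
    _ = _ := by
        simp only [Finset.sum_sub_distrib, Finset.sum_add_distrib, ← Finset.mul_sum, h1, h2, h3]
        ring

theorem pow_row_sum {A : Matrix (Fin N) (Fin N) ℝ} (hrow : ∀ i, ∑ j, A i j = 1) (m : ℕ)
    (i : Fin N) : ∑ j, (A ^ m) i j = 1 := by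
  have h : ∀ S : Matrix (Fin N) (Fin N) ℝ, S *ᵥ 1 = fun i => ∑ j, S i j := fun S => by
    ext i; simp [Matrix.mulVec, dotProduct]
  have h1 : A *ᵥ 1 = 1 := by rw [h]; ext i; simp [hrow]
  have hm : (A ^ m) *ᵥ 1 = 1 := by
    induction m with
    | zero => simp
    | succ m ih => rw [pow_succ, ← Matrix.mulVec_mulVec, h1, ih]
  rw [h] at hm
  simpa using congrFun hm i

theorem blockOp_pow_fixed {S : Matrix (Fin N) (Fin N) ℝ} {x : BlockVec N H}
    (hx : blockOp H S x = x) (m : ℕ) : blockOp H (S ^ m) x = x := by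
  induction m with
  | zero => rw [pow_zero, blockOp_one]
  | succ m ih => rw [pow_succ, blockOp_mul, hx, ih]

/-- A block vector fixed by a primitive symmetric stochastic matrix has all its blocks equal: some
power of the matrix has positive entries, so its edge energy vanishes only on such vectors. -/
theorem consensus_of_fixed {A : Matrix (Fin N) (Fin N) ℝ} (hAsymm : A.IsSymm)
    (hrow : ∀ i, ∑ j, A i j = 1) {m : ℕ} (hm : ∀ i j, 0 < (A ^ m) i j)
    {x : BlockVec N H} (hx : blockOp H A x = x) (k l : Fin N) : x k = x l := by
  have h := edge_energy (hAsymm.pow m) (pow_row_sum hrow m) 1 (by norm_num) x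
  rw [blockOp_pow_fixed hx, real_inner_self_eq_norm_sq, one_mul, sub_self, mul_zero] at h
  have hnn : ∀ i j, 0 ≤ (A ^ m) i j * ‖x i - (1 : ℝ) • x j‖ ^ 2 := fun i j =>
    mul_nonneg (hm i j).le (sq_nonneg _)
  rw [Finset.sum_eq_zero_iff_of_nonneg fun i _ => Finset.sum_nonneg fun j _ => hnn i j] at h
  have h1 := (Finset.sum_eq_zero_iff_of_nonneg fun j _ => hnn k j).1 (h k (Finset.mem_univ _)) l
    (Finset.mem_univ _)
  simpa [(hm k l).ne', sub_eq_zero] using h1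

/-- Positive definiteness of `Ā = (I + A) / 2`: its quadratic form is a multiple of the edge energy
of `A` with sign `-1`, and the constant is its minimum on the unit sphere. -/
theorem exists_coercive {A : Matrix (Fin N) (Fin N) ℝ} (hAsymm : A.IsSymm)
    (hApos : ∀ i j, 0 ≤ A i j) (hrow : ∀ i, ∑ j, A i j = 1)
    {m : ℕ} (hm : ∀ i j, 0 < (A ^ m) i j) :
    ∃ c : ℝ, 0 < c ∧ ∀ x : BlockVec N H,
      c * ‖x‖ ^ 2 ≤ inner ℝ (blockOp H ((2⁻¹ : ℝ) • (1 + A)) x) x := by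
  have hB : ∀ x : BlockVec N H, inner ℝ (blockOp H ((2⁻¹ : ℝ) • (1 + A)) x) x
      = 4⁻¹ * ∑ k, ∑ l, A k l * ‖x k - (-1 : ℝ) • x l‖ ^ 2 := fun x => by
    rw [edge_energy hAsymm hrow (-1) (by norm_num), blockOp_smul, blockOp_add, blockOp_one,
      real_inner_smul_left, inner_add_left, real_inner_self_eq_norm_sq]
    ring
  have hnn : ∀ (x : BlockVec N H) i j, 0 ≤ A i j * ‖x i - (-1 : ℝ) • x j‖ ^ 2 := fun x i j =>
    mul_nonneg (hApos i j) (sq_nonneg _)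
  have hpos : ∀ x : BlockVec N H, x ≠ 0 → 0 < inner ℝ (blockOp H ((2⁻¹ : ℝ) • (1 + A)) x) x := by
    intro x hx
    have h0 : 0 ≤ inner ℝ (blockOp H ((2⁻¹ : ℝ) • (1 + A)) x) x := by
      rw [hB]
      exact mul_nonneg (by norm_num) (Finset.sum_nonneg fun i _ => Finset.sum_nonneg fun j _ =>
        hnn x i j)
    refine lt_of_le_of_ne h0 fun h => hx ?_
    rw [hB, zero_eq_mul, or_iff_right (by norm_num),
      Finset.sum_eq_zero_iff_of_nonneg fun i _ => Finset.sum_nonneg fun j _ => hnn x i j] at h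
    have hAx : blockOp H A x = -x := by
      ext1 k
      have hk : ∀ l, A k l • x l = A k l • (-x k) := fun l => by
        have h1 := (Finset.sum_eq_zero_iff_of_nonneg fun j _ => hnn x k j).1
          (h k (Finset.mem_univ _)) l (Finset.mem_univ _)
        rcases mul_eq_zero.1 h1 with h2 | h2
        · simp [h2]
        · have h3 : x k + x l = 0 := by simpa using h2
          rw [eq_neg_of_add_eq_zero_right h3]
      rw [blockOp_apply, Finset.sum_congr rfl fun l _ => hk l, ← Finset.sum_smul, hrow, one_smul]
      rfl
    have hAA : blockOp H (A ^ 2) x = x := by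
      rw [pow_two, blockOp_mul, hAx, map_neg, hAx, neg_neg]
    -- `A ^ 2` is again primitive, so `x` is a consensus vector and `A` fixes it
    have hpow : ∀ i j, 0 < ((A ^ 2) ^ m) i j := fun i j => by
      rw [← pow_mul, mul_comm, pow_mul, pow_two, Matrix.mul_apply]
      exact Finset.sum_pos (fun l _ => mul_pos (hm i l) (hm l j)) ⟨i, Finset.mem_univ _⟩
    have hcons := consensus_of_fixed (hAsymm.pow 2) (pow_row_sum hrow 2) hpow hAA
    have hfix := blockOp_const hrow hcons
    rw [hAx] at hfix
    have h2 : (2 : ℝ) • x = 0 := by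
      rw [two_smul]
      nth_rewrite 1 [← hfix]
      exact neg_add_cancel x
    exact (smul_eq_zero.1 h2).resolve_left two_ne_zero
  rcases subsingleton_or_nontrivial (BlockVec N H) with hs | hs
  · exact ⟨1, one_pos, fun x => by rw [Subsingleton.elim x 0]; simp⟩
  obtain ⟨z, hz, hmin⟩ := (isCompact_sphere (0 : BlockVec N H) 1).exists_isMinOn
    (NormedSpace.sphere_nonempty.2 zero_le_one)
    (f := fun x => inner ℝ (blockOp H ((2⁻¹ : ℝ) • (1 + A)) x) x) (by fun_prop)
  refine ⟨_, hpos z (ne_zero_of_mem_unit_sphere ⟨z, hz⟩), fun x => ?_⟩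
  rcases eq_or_ne x 0 with rfl | hx
  · simp
  have hxn : 0 < ‖x‖ := norm_pos_iff.2 hx
  have h := hmin (show ‖x‖⁻¹ • x ∈ Metric.sphere (0 : BlockVec N H) 1 by
    simp [norm_smul, hxn.ne'])
  simp only [Set.mem_ofPred_eq, map_smul, real_inner_smul_left, real_inner_smul_right] at h
  calc _ ≤ ‖x‖⁻¹ * (‖x‖⁻¹ * inner ℝ (blockOp H ((2⁻¹ : ℝ) • (1 + A)) x) x) * ‖x‖ ^ 2 := by gcongr
    _ = _ := by field_simp

theorem exists_norm_le_of_ker_eq_bot {E F : Type*} [NormedAddCommGroup E] [NormedSpace ℝ E]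
    [FiniteDimensional ℝ E] [NormedAddCommGroup F] [NormedSpace ℝ F] (f : E →ₗ[ℝ] F)
    (hf : LinearMap.ker f = ⊥) : ∃ a : ℝ, 0 < a ∧ ∀ x, ‖x‖ ≤ a * ‖f x‖ := by
  obtain ⟨K, hK, h⟩ := f.exists_antilipschitzWith hf
  exact ⟨K, by exact_mod_cast hK, fun x => by simpa using h.le_mul_dist x 0⟩

/-- A symmetric operator is injective on its own range, hence bounded below there. -/
theorem exists_norm_le_on_range {E : Type*} [NormedAddCommGroup E] [InnerProductSpace ℝ E]
    [FiniteDimensional ℝ E] (V : E →L[ℝ] E) (hV : ∀ x y, inner ℝ (V x) y = inner ℝ x (V y)) :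
    ∃ a : ℝ, 0 < a ∧ ∀ x, ‖V x‖ ≤ a * ‖V (V x)‖ := by
  obtain ⟨a, ha, h⟩ := exists_norm_le_of_ker_eq_bot
    ((V : E →ₗ[ℝ] E).domRestrict (LinearMap.range (V : E →ₗ[ℝ] E))) (by
      rw [LinearMap.ker_eq_bot']
      rintro ⟨_, z, rfl⟩ hz
      have hz' : V (V z) = 0 := hz
      have : inner ℝ (V z) (V z) = 0 := by rw [hV, hz', inner_zero_right]
      exact Subtype.ext (inner_self_eq_zero.1 this))
  exact ⟨a, ha, fun x => h ⟨V x, x, rfl⟩⟩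

/-- The kernel of `V` is the consensus subspace, on which a single block controls the whole
vector. -/
theorem exists_consensus_bound {A V : Matrix (Fin N) (Fin N) ℝ} (hAsymm : A.IsSymm)
    (hrow : ∀ i, ∑ j, A i j = 1) {m : ℕ} (hm : ∀ i j, 0 < (A ^ m) i j)
    {r : ℝ} (hr : r ≠ 0) (hVsq : V * V = r • (1 - A)) {ν : ℝ} (hν : 0 < ν) (k₀ : Fin N) :
    ∃ K : ℝ, 0 < K ∧ ∀ x : BlockVec N H,
      ‖x‖ ^ 2 ≤ K * (‖blockOp H V x‖ ^ 2 + ν * ‖x k₀‖ ^ 2) := by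
  obtain ⟨a, ha, h⟩ := exists_norm_le_of_ker_eq_bot
    ((blockOp H V : BlockVec N H →ₗ[ℝ] BlockVec N H).prod
      (PiLp.projₗ 2 (fun _ : Fin N => H) k₀)) (by
      rw [LinearMap.ker_eq_bot']
      intro x hx
      obtain ⟨h1, h2⟩ := Prod.ext_iff.1 hx
      have h1' : blockOp H V x = 0 := h1
      have h2' : x k₀ = 0 := h2
      have h3 : r • (x - blockOp H A x) = 0 := by
        rw [← map_zero (blockOp H V), ← h1', ← blockOp_mul, hVsq, blockOp_smul, blockOp_sub,
          blockOp_one]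
      have h4 : blockOp H A x = x := (sub_eq_zero.1 ((smul_eq_zero.1 h3).resolve_left hr)).symm
      ext1 k
      rw [consensus_of_fixed hAsymm hrow hm h4 k k₀, h2']
      rfl)
  refine ⟨a ^ 2 * (1 + ν⁻¹), by positivity, fun x => ?_⟩
  have hx := h x
  have hmax : ‖((blockOp H V : BlockVec N H →ₗ[ℝ] BlockVec N H).prod
      (PiLp.projₗ 2 (fun _ : Fin N => H) k₀)) x‖ ^ 2
      ≤ ‖blockOp H V x‖ ^ 2 + ‖x k₀‖ ^ 2 := by
    rw [Prod.norm_def]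
    rcases max_choice (‖blockOp H V x‖) (‖x k₀‖) with h | h
    · change (max (‖blockOp H V x‖) (‖x k₀‖)) ^ 2 ≤ _
      rw [h]; nlinarith [sq_nonneg ‖x k₀‖]
    · change (max (‖blockOp H V x‖) (‖x k₀‖)) ^ 2 ≤ _
      rw [h]; nlinarith [sq_nonneg ‖blockOp H V x‖]
  calc ‖x‖ ^ 2 ≤ _ := pow_le_pow_left₀ (norm_nonneg _) hx 2
    _ ≤ a ^ 2 * (‖blockOp H V x‖ ^ 2 + ‖x k₀‖ ^ 2) := by rw [mul_pow]; gcongr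
    _ ≤ a ^ 2 * ((1 + ν⁻¹) * (‖blockOp H V x‖ ^ 2 + ν * ‖x k₀‖ ^ 2)) := by
        gcongr
        have : (1 + ν⁻¹) * (‖blockOp H V x‖ ^ 2 + ν * ‖x k₀‖ ^ 2)
          = ‖blockOp H V x‖ ^ 2 + ‖x k₀‖ ^ 2 + (ν⁻¹ * ‖blockOp H V x‖ ^ 2 + ν * ‖x k₀‖ ^ 2) := by
          field_simp; ring
        rw [this]
        have : 0 ≤ ν⁻¹ * ‖blockOp H V x‖ ^ 2 + ν * ‖x k₀‖ ^ 2 := by positivity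
        linarith
    _ = _ := by ring

end Block

/-! ### Convergence of EXTRA -/

set_option maxHeartbeats 1000000

/-- Linear convergence of EXTRA: in the EXTRA setting (A symmetric doubly-stochastic
primitive, `P = (1/N)I`, `V` the PSD square root of `(I − A)/(2N)`, `Ā = (I + A)/2`) with
the cost assumptions, there exists a threshold `μ̄ > 0` such that for every `0 < μ ≤ μ̄`
the EXTRA iterates `(Wᵉ_i, Yᵉ_i)` (here `W 0, Y 0` play the role of `Wᵉ_{−1}, Yᵉ_{−1}`
with `Y 0 = 0`) converge exponentially fast to `(W⋆, Y⋆_o)`, where `W⋆ = (w⋆,…,w⋆)` with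
`w⋆` the minimizer of `∑_k J_k`, and `Y⋆_o` is the unique dual vector in the range of
`V ⊗ I_M` with `μ∇J_k(w⋆) + N ∑_l V_{k,l}(Y⋆_o)_l = 0` for every `k`. -/
theorem stmt_2 (N M : ℕ) (hN : 2 ≤ N) (A : Matrix (Fin N) (Fin N) ℝ)
    (hAsymm : A.IsSymm)
    (hApos : ∀ i j, 0 ≤ A i j)
    (hrow : ∀ i, ∑ j, A i j = 1)
    (hAprim : ∃ m : ℕ, 0 < m ∧ ∀ i j, 0 < (A ^ m) i j)
    (V : Matrix (Fin N) (Fin N) ℝ) (hV : V.PosSemidef)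
    (hVsq : V * V = ((2 * (N : ℝ))⁻¹) • ((1 : Matrix (Fin N) (Fin N) ℝ) - A))
    (J : Fin N → EuclideanSpace ℝ (Fin M) → ℝ)
    (gJ : Fin N → EuclideanSpace ℝ (Fin M) → EuclideanSpace ℝ (Fin M))
    (hgJ : ∀ k x, HasGradientAt (J k) (gJ k x) x)
    (hconv : ∀ k, ConvexOn ℝ Set.univ (J k))
    (δ : ℝ) (hδ : 0 < δ)
    (hLip : ∀ k x y, ‖gJ k x - gJ k y‖ ≤ δ * ‖x - y‖)
    (ν : ℝ) (hν : 0 < ν) (k₀ : Fin N)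
    (hsc : StrongConvexOn Set.univ ν (J k₀))
    (wstar : EuclideanSpace ℝ (Fin M))
    (hwstar : ∀ w, ∑ k, J k wstar ≤ ∑ k, J k w) :
    ∃ μbar : ℝ, 0 < μbar ∧
      ∀ μ : ℝ, 0 < μ → μ ≤ μbar →
        ∀ (W Y : ℕ → Fin N → EuclideanSpace ℝ (Fin M))
          (Ystar : Fin N → EuclideanSpace ℝ (Fin M)),
          -- `Y⋆_o` lies in the range of `V ⊗ I_M`
          (∃ Xv : Fin N → EuclideanSpace ℝ (Fin M),
            Ystar = fun k => ∑ l, V k l • Xv l) →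
          -- optimality condition
          (∀ k, μ • gJ k wstar + (N : ℝ) • (∑ l, V k l • Ystar l) = 0) →
          -- initialization `Yᵉ_{−1} = 0`
          Y 0 = 0 →
          -- EXTRA primal recursion
          (∀ i k, W (i + 1) k =
            (∑ l, (((2⁻¹ : ℝ) • ((1 : Matrix (Fin N) (Fin N) ℝ) + A)) k l) • W i l)
            - μ • gJ k (W i k)
            - (N : ℝ) • (∑ l, V k l • Y i l)) →
          -- dual recursion
          (∀ i k, Y (i + 1) k = Y i k + ∑ l, V k l • W (i + 1) l) →
          ∃ C : ℝ, 0 ≤ C ∧ ∃ ρ : ℝ, 0 ≤ ρ ∧ ρ < 1 ∧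
            ∀ i : ℕ,
              (∑ k, ‖W (i + 1) k - wstar‖ ^ 2) +
                (∑ k, ‖Y (i + 1) k - Ystar k‖ ^ 2) ≤ C * ρ ^ i := by
  obtain ⟨m, -, hm⟩ := hAprim
  have hN0 : (0 : ℝ) < N := by exact_mod_cast (by omega : 0 < N)
  have hVsymm : V.IsSymm := by
    have h := hV.isHermitian
    rwa [Matrix.IsHermitian, Matrix.conjTranspose_eq_transpose_of_trivial] at h
  have hBsymm : ((2⁻¹ : ℝ) • ((1 : Matrix (Fin N) (Fin N) ℝ) + A)).IsSymm :=
    (Matrix.isSymm_one.add hAsymm).smul _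
  obtain ⟨c, hc, hBc⟩ := exists_coercive (H := EuclideanSpace ℝ (Fin M)) hAsymm hApos hrow hm
  obtain ⟨K, hK, hKb⟩ := exists_consensus_bound (H := EuclideanSpace ℝ (Fin M)) hAsymm hrow hm
    (by positivity : (2 * (N : ℝ))⁻¹ ≠ 0) hVsq hν k₀
  obtain ⟨a, ha, hab⟩ := exists_norm_le_on_range (blockOp (EuclideanSpace ℝ (Fin M)) V)
    (inner_blockOp hVsymm)
  have hB : ∀ x : BlockVec N (EuclideanSpace ℝ (Fin M)),
      blockOp (EuclideanSpace ℝ (Fin M)) ((2⁻¹ : ℝ) • (1 + A)) x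
      = x - (N : ℝ) •
        blockOp (EuclideanSpace ℝ (Fin M)) V (blockOp (EuclideanSpace ℝ (Fin M)) V x) := fun x => by
    rw [← blockOp_mul, hVsq, blockOp_smul, blockOp_smul, blockOp_sub, blockOp_add, blockOp_one,
      smul_smul, show (N : ℝ) * (2 * (N : ℝ))⁻¹ = 2⁻¹ by field_simp]
    module
  obtain ⟨μbar, hμbar, hμs⟩ := exists_stepsize (G := 2 / c * (δ ^ 2 * K))
    ‖blockOp (EuclideanSpace ℝ (Fin M)) V‖ (by positivity) hN0 hc
  refine ⟨μbar, hμbar, ?_⟩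
  intro μ hμ hμle W Y Ystar hYr hopt hY0 hW hY
  obtain ⟨h1, h2, h3⟩ := hμs μ hμ hμle
  obtain ⟨ρ, hρ0, hρ1, hstep⟩ := extra_abstract_step (blockOp (EuclideanSpace ℝ (Fin M)) V)
    (blockOp (EuclideanSpace ℝ (Fin M)) ((2⁻¹ : ℝ) • (1 + A))) N c K a δ μ hN0 hc hK ha hδ hμ
    (inner_blockOp hVsymm)
    (inner_blockOp hBsymm) hB hBc h1 h2 h3
  -- the errors of the iterates, as block vectors
  set w : ℕ → BlockVec N (EuclideanSpace ℝ (Fin M)) :=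
    fun i => WithLp.toLp 2 fun k => W i k - wstar with hw
  set y : ℕ → BlockVec N (EuclideanSpace ℝ (Fin M)) :=
    fun i => WithLp.toLp 2 fun k => Y i k - Ystar k with hy
  set d : ℕ → BlockVec N (EuclideanSpace ℝ (Fin M)) :=
    fun i => WithLp.toLp 2 fun k => gJ k (W i k) - gJ k wstar with hd
  set ws : BlockVec N (EuclideanSpace ℝ (Fin M)) := WithLp.toLp 2 fun _ => wstar with hws
  have hVws : blockOp (EuclideanSpace ℝ (Fin M)) V ws = 0 := by
    have h : blockOp (EuclideanSpace ℝ (Fin M)) V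
        (blockOp (EuclideanSpace ℝ (Fin M)) V ws) = 0 := by
      rw [← blockOp_mul, hVsq, blockOp_smul, blockOp_sub, blockOp_one,
        blockOp_const hrow (x := ws) (fun _ _ => rfl), sub_self, smul_zero]
    have h' := hab ws
    rw [h, norm_zero, mul_zero] at h'
    exact norm_le_zero_iff.1 h'
  have hBws : blockOp (EuclideanSpace ℝ (Fin M)) ((2⁻¹ : ℝ) • (1 + A)) ws = ws := by
    rw [hB, hVws, map_zero, smul_zero, sub_zero]
  have hVsum : ∀ k, ∑ l, V k l • wstar = 0 := fun k =>
    congrArg (fun z : BlockVec N (EuclideanSpace ℝ (Fin M)) => z k) hVws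
  have hBsum : ∀ k, ∑ l, ((2⁻¹ : ℝ) • ((1 : Matrix (Fin N) (Fin N) ℝ) + A)) k l • wstar = wstar :=
    fun k => congrArg (fun z : BlockVec N (EuclideanSpace ℝ (Fin M)) => z k) hBws
  have hwrec : ∀ i, w (i + 1) =
      blockOp (EuclideanSpace ℝ (Fin M)) ((2⁻¹ : ℝ) • (1 + A)) (w i) - μ • d i
      - (N : ℝ) • blockOp (EuclideanSpace ℝ (Fin M)) V (y i) := fun i => by
    ext1 k
    simp only [hw, hy, hd, PiLp.sub_apply, PiLp.smul_apply, blockOp_apply, smul_sub,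
      Finset.sum_sub_distrib, hBsum]
    rw [hW i k, eq_neg_of_add_eq_zero_left (hopt k)]
    abel
  have hyrec : ∀ i, y (i + 1) =
      y i + blockOp (EuclideanSpace ℝ (Fin M)) V (w (i + 1)) := fun i => by
    ext1 k
    simp only [hw, hy, PiLp.add_apply, blockOp_apply, smul_sub, Finset.sum_sub_distrib, hVsum]
    rw [hY i k]
    abel
  have hyrange : ∀ i, ∃ z, y i = blockOp (EuclideanSpace ℝ (Fin M)) V z := fun i => by
    induction i with
    | zero =>
      obtain ⟨Xv, hXv⟩ := hYr
      refine ⟨-WithLp.toLp 2 Xv, ?_⟩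
      ext1 k
      rw [map_neg]
      simp only [hy, hY0, hXv, PiLp.neg_apply, blockOp_apply, Pi.zero_apply, zero_sub]
    | succ i ih =>
      obtain ⟨z, hz⟩ := ih
      exact ⟨z + w (i + 1), by rw [hyrec, hz, map_add]⟩
  have hdLip : ∀ i, ‖d i‖ ≤ δ * ‖w i‖ := fun i => by
    refine (sq_le_sq₀ (norm_nonneg _) (by positivity)).1 ?_
    rw [mul_pow, PiLp.norm_sq_eq_of_L2, PiLp.norm_sq_eq_of_L2, Finset.mul_sum]
    refine Finset.sum_le_sum fun k _ => ?_
    rw [← mul_pow]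
    exact pow_le_pow_left₀ (norm_nonneg _) (hLip k _ _) 2
  have hmono : ∀ i k, 0 ≤ inner ℝ (d i k) (w i k) := fun i k =>
    inner_sub_nonneg_of_convexOn (hgJ k) (hconv k) _ _
  have hinner : ∀ i, ν * ‖w i k₀‖ ^ 2 ≤ inner ℝ (d i) (w i) := fun i => by
    rw [PiLp.inner_apply]
    exact (inner_sub_ge_of_strongConvexOn (hgJ k₀) hsc _ _).trans
      (Finset.single_le_sum (f := fun k => inner ℝ (d i k) (w i k)) (fun k _ => hmono i k)
        (Finset.mem_univ k₀))
  set E : ℕ → ℝ := fun i =>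
    inner ℝ (blockOp (EuclideanSpace ℝ (Fin M)) ((2⁻¹ : ℝ) • (1 + A)) (w i)) (w i)
    + N * ‖y i‖ ^ 2 with hE
  have hErec : ∀ i, E (i + 1) ≤ ρ * E i := fun i => by
    refine hstep (w i) (y i) (d i) _ _ (hdLip i) ?_ ?_ ?_ (hwrec i) (hyrec i)
    · exact (by positivity : 0 ≤ ν * ‖w i k₀‖ ^ 2).trans (hinner i)
    · refine (hKb (w i)).trans ?_
      have := hinner i
      gcongr
    · obtain ⟨z, hz⟩ := hyrange (i + 1)
      rw [hz]; exact hab z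
  have hEgeom : ∀ i, E (i + 1) ≤ E 1 * ρ ^ i := fun i => by
    induction i with
    | zero => simp
    | succ i ih =>
      calc E (i + 1 + 1) ≤ ρ * E (i + 1) := hErec _
        _ ≤ ρ * (E 1 * ρ ^ i) := by gcongr
        _ = E 1 * ρ ^ (i + 1) := by ring
  have hElow : ∀ i, min c N * (‖w i‖ ^ 2 + ‖y i‖ ^ 2) ≤ E i := fun i => by
    have h1 : min c N * ‖w i‖ ^ 2 ≤ c * ‖w i‖ ^ 2 := by gcongr; exact min_le_left _ _
    have h2 : min c N * ‖y i‖ ^ 2 ≤ N * ‖y i‖ ^ 2 := by gcongr; exact min_le_right _ _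
    have h3 := hBc (w i)
    simp only [hE]; linarith
  have hmin : 0 < min c (N : ℝ) := lt_min hc hN0
  have hE1 : 0 ≤ E 1 := le_trans (by positivity) (hElow 1)
  refine ⟨E 1 / min c N, by positivity, ρ, hρ0, hρ1, fun i => ?_⟩
  have hgoal : (∑ k, ‖W (i + 1) k - wstar‖ ^ 2) + (∑ k, ‖Y (i + 1) k - Ystar k‖ ^ 2)
      = ‖w (i + 1)‖ ^ 2 + ‖y (i + 1)‖ ^ 2 := by
    rw [PiLp.norm_sq_eq_of_L2, PiLp.norm_sq_eq_of_L2]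
  rw [hgoal, div_mul_eq_mul_div, le_div_iff₀ hmin, mul_comm]
  exact (hElow _).trans (hEgeom i)
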